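/- arXiv:1610.05898 — 2 statements merged into one kernel-verified Lean document; each statement's English description precedes it below -/
import Mathlib

section
/- Let D be the Levi-Civita connection of a pseudo-Kähler or para-Kähler structure (g, J, Ω) on a symplectic manifold of dimension 2n > 2. Then: (1) the symplectic Weyl tensor of D is trace-free with respect to the metric g (i.e. g^{ab}W_{iab}{}^{p}g_{pj} = 0) if and only if g is Einstein; (2) the symplectic Weyl tensor of D vanishes if and only if (g, J, Ω) has constant (para-)holomorphic sectional curvature. -/
/- Chart model of a symplectic manifold: the manifold is modeled by (a global affine chart of)
a finite-dimensional real normed vector space `E`; a symplectic form is a smooth field of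
nondegenerate antisymmetric bilinear forms (closedness is automatic in the presence of a
compatible torsion-free connection), and a symplectic connection is recorded by its
(torsion-free) Christoffel symbols, preserving the symplectic form. -/

structure SympForm (E : Type*) [NormedAddCommGroup E] [NormedSpace ℝ E] where
  ω : E → E →L[ℝ] E →L[ℝ] ℝ
  smooth : ContDiff ℝ (⊤ : ℕ∞) ω
  skew : ∀ x u v, ω x u v = - ω x v u
  nondeg : ∀ x u, (∀ v, ω x u v = 0) → u = 0

structure SympConnection {E : Type*} [NormedAddCommGroup E] [NormedSpace ℝ E]
    (Ω : SympForm E) where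
  Γ : E → E →L[ℝ] E →L[ℝ] E
  smooth : ContDiff ℝ (⊤ : ℕ∞) Γ
  symm : ∀ x u v, Γ x u v = Γ x v u
  parallel : ∀ x u v w, fderiv ℝ Ω.ω x u v w = Ω.ω x (Γ x u v) w + Ω.ω x v (Γ x u w)

variable {E : Type*} [NormedAddCommGroup E] [NormedSpace ℝ E]

/-- Curvature `R(u,v)w = ∇_u∇_v w - ∇_v∇_u w - ∇_{[u,v]}w` of a symplectic connection,
evaluated on constant vector fields of the chart, as an operator in `w`. -/
noncomputable def curvOp {Ω : SympForm E} (C : SympConnection Ω) (x u v : E) : E →L[ℝ] E :=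
  fderiv ℝ C.Γ x u v - fderiv ℝ C.Γ x v u
    + (C.Γ x u).comp (C.Γ x v) - (C.Γ x v).comp (C.Γ x u)

/-- Lowered curvature `R_{ijkl} = R_{ijk}{}^p Ω_{pl}`, i.e. `Ω(R(u,v)w, z)`. -/
noncomputable def Rlow {Ω : SympForm E} (C : SympConnection Ω) (x u v w z : E) : ℝ :=
  Ω.ω x (curvOp C x u v w) z

/-- The symplectic curvature quadratic form `scurv_{x,L}(Z)` of the plane `L` spanned by `X, Y`. -/
noncomputable def scurv {Ω : SympForm E} (C : SympConnection Ω) (x X Y Z : E) : ℝ :=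
  Rlow C x X Y Z Z / Ω.ω x X Y

/-- Ricci tensor `R_{ij} = R_{pij}{}^p`: the trace of `w ↦ R(w,u)v`. -/
noncomputable def ricci {Ω : SympForm E} (C : SympConnection Ω) (x u v : E) : ℝ :=
  LinearMap.trace ℝ E
    ((((fderiv ℝ C.Γ x).flip u).flip v - ((fderiv ℝ C.Γ x) u).flip v
      + (C.Γ x).flip (C.Γ x u v) - (C.Γ x u).comp ((C.Γ x).flip v)).toLinearMap)

/-- Covariant derivative `(∇_w Ric)(u,v)` of the Ricci tensor. -/
noncomputable def covDerivRic {Ω : SympForm E} (C : SympConnection Ω) (x w u v : E) : ℝ :=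
  fderiv ℝ (fun y => ricci C y u v) x w - ricci C x (C.Γ x w u) v - ricci C x u (C.Γ x w v)

/-- Covariant derivative `(∇_a R)(u,v,w,z)` of the (lowered) curvature tensor. -/
noncomputable def covDerivR {Ω : SympForm E} (C : SympConnection Ω) (x a u v w z : E) : ℝ :=
  fderiv ℝ (fun y => Rlow C y u v w z) x a
    - Rlow C x (C.Γ x a u) v w z - Rlow C x u (C.Γ x a v) w z
    - Rlow C x u v (C.Γ x a w) z - Rlow C x u v w (C.Γ x a z)

/-- `∇` is locally symmetric: `∇R = 0`. -/
def LocallySymmetric {Ω : SympForm E} (C : SympConnection Ω) : Prop :=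
  ∀ x a u v w z, covDerivR C x a u v w z = 0

/-- The Ricci tensor is parallel. -/
def ParallelRicci {Ω : SympForm E} (C : SympConnection Ω) : Prop :=
  ∀ x w u v, covDerivRic C x w u v = 0

/-- The symplectic Weyl tensor
`W_{ijkl} = R_{ijkl} − (1/(n+1))(Ω_{i(k}R_{l)j} − Ω_{j(k}R_{l)i} + Ω_{ij}R_{kl})`
on a manifold of dimension `2n`. -/
noncomputable def weyl (n : ℕ) {Ω : SympForm E} (C : SympConnection Ω) (x u v w z : E) : ℝ :=
  Rlow C x u v w z - (1 / ((n : ℝ) + 1)) *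
    ((Ω.ω x u w * ricci C x z v + Ω.ω x u z * ricci C x w v) / 2
      - (Ω.ω x v w * ricci C x z u + Ω.ω x v z * ricci C x w u) / 2
      + Ω.ω x u v * ricci C x w z)

/-- `∇` is Weyl flat (of Ricci type): its symplectic Weyl tensor vanishes. -/
def WeylFlat (n : ℕ) {Ω : SympForm E} (C : SympConnection Ω) : Prop :=
  ∀ x u v w z, weyl n C x u v w z = 0

/-- `∇` is preferred: `∇_{(i}R_{jk)} = 0` (cyclic symmetrization suffices since `Ric` is
symmetric in its last two arguments). -/
def Preferred {Ω : SympForm E} (C : SympConnection Ω) : Prop :=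
  ∀ x u v w, covDerivRic C x u v w + covDerivRic C x v w u + covDerivRic C x w u v = 0

/-- Vanishing of the curvature one-form `ρ_i = ∇^p R_{ip}`: the index is raised with `Ω`, and
the `Ω`-contraction is encoded as the trace of any linear packaging `D` of `∇Ric` against `Ω`
(such a `D` exists and is unique by nondegeneracy of `Ω`). -/
def RhoZero {Ω : SympForm E} (C : SympConnection Ω) : Prop :=
  ∀ x u, ∀ D : E →ₗ[ℝ] E,
    (∀ w v, Ω.ω x (D w) v = covDerivRic C x w u v) → LinearMap.trace ℝ E D = 0

/-- `A` is a parallel symmetric covariant 2-tensor field. -/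
def IsParallelSym2 {Ω : SympForm E} (C : SympConnection Ω)
    (A : E → E →L[ℝ] E →L[ℝ] ℝ) : Prop :=
  (∀ x u v, A x u v = A x v u) ∧ Differentiable ℝ A ∧
    ∀ x u v w, fderiv ℝ A x u v w = A x (C.Γ x u v) w + A x v (C.Γ x u w)

/-- `∇` has constant symplectic sectional curvature: there is a parallel symmetric 2-tensor `A`
such that on every 2-dimensional symplectic subspace (spanned by `X, Y` with `Ω(X,Y) ≠ 0`)
the symplectic curvature quadratic form is the restriction of the quadratic form of `A`. -/
def HasConstScurv {Ω : SympForm E} (C : SympConnection Ω) : Prop :=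
  ∃ A : E → E →L[ℝ] E →L[ℝ] ℝ, IsParallelSym2 C A ∧
    ∀ x X Y, Ω.ω x X Y ≠ 0 →
      ∀ Z ∈ Submodule.span ℝ ({X, Y} : Set E), scurv C x X Y Z = A x Z Z

/-- Lie bracket of vector fields on the chart. -/
noncomputable def lieVF (X Y : E → E) (x : E) : E :=
  fderiv ℝ Y x (X x) - fderiv ℝ X x (Y x)

/-- Covariant derivative `∇_X Y` of vector fields on the chart. -/
noncomputable def covVF {Ω : SympForm E} (C : SympConnection Ω) (X Y : E → E) (x : E) : E :=
  fderiv ℝ Y x (X x) + C.Γ x (X x) (Y x)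

/-- Nijenhuis tensor of an endomorphism field, evaluated on constant vector fields. -/
noncomputable def nijTensor (A : E → E → E) (x u v : E) : E :=
  lieVF (fun y => A y u) (fun y => A y v) x
    - A x (lieVF (fun y => A y u) (fun _ => v) x)
    - A x (lieVF (fun _ => u) (fun y => A y v) x)
    + A x (A x (lieVF (fun _ => u) (fun _ => v) x))

/-- Covariant derivative along a curve `γ` of a field `V` along `γ`. -/
noncomputable def covAlong {Ω : SympForm E} (C : SympConnection Ω) (γ V : ℝ → E) (t : ℝ) : E :=
  deriv V t + C.Γ (γ t) (deriv γ t) (V t)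

/-- `(g,J,Ω)` has constant (para-)holomorphic sectional curvature `4c`:
`R_{ijkl} = 2c(Ω_{i(k}g_{l)j} − Ω_{j(k}g_{l)i} + Ω_{ij}g_{kl})`. -/
def ConstHoloSec {Ω : SympForm E} (C : SympConnection Ω) (g : E → E → E → ℝ) (c : ℝ) : Prop :=
  ∀ x u v w z, Rlow C x u v w z =
    2 * c * ((Ω.ω x u w * g x z v + Ω.ω x u z * g x w v) / 2
      - (Ω.ω x v w * g x z u + Ω.ω x v z * g x w u) / 2
      + Ω.ω x u v * g x w z)

/-- `C` is the Levi-Civita connection of the metric `g`: `C` is torsion free and `∇g = 0`. -/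
def IsLeviCivita {Ω : SympForm E} (C : SympConnection Ω) (g : E → E → E → ℝ) : Prop :=
  ∀ x u v w, fderiv ℝ (fun y => g y v w) x u = g x (C.Γ x u v) w + g x v (C.Γ x u w)

/- Because the Ricci tensor is symmetric and `J` is skew-adjoint for it, contracting the
symplectic Weyl tensor with the metric gives
`g^{ab}W_{iab}{}^p g_{pj} = (1 - m) R_{ij} - (m/2) s g_{ij}`, where `m = 1/(n+1)` and `s` is the
scalar curvature. This vanishes exactly when `Ric = f g` for a function `f`. By the Bianchi
identities the 2-form `tr(J R(u, v)) = 2 f Ω(u, v)` is closed, so `df ∧ Ω = 0`, which forces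
`df = 0` in dimension greater than two. When `Ric = κ g`, the equation `W = 0` reads as constant
holomorphic sectional curvature. -/

/-! ### Bilinear algebra -/

section Algebra

open LinearMap (BilinForm IsAdjointPair)

variable {k V : Type*} [Field k] [AddCommGroup V] [Module k V]

theorem trace_eq_of_isAdjointPair [FiniteDimensional k V] {B : BilinForm k V}
    (hB : B.Nondegenerate) {f h : Module.End k V} (hfh : IsAdjointPair B B f h) :
    LinearMap.trace k V f = LinearMap.trace k V h := by
  have hconj : (B.toDual hB).conj f = Module.Dual.transpose h := by
    ext φ v
    obtain ⟨u, rfl⟩ := (B.toDual hB).surjective φ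
    simpa [LinearEquiv.conj_apply_apply, Module.Dual.transpose_apply,
      LinearMap.BilinForm.toDual_def] using hfh u v
  rw [← LinearMap.trace_conj' f (B.toDual hB), hconj, LinearMap.trace_transpose']

theorem eq_of_forall_apply_eq {B : BilinForm k V} (hB : B.Nondegenerate) {u v : V}
    (h : ∀ w, B u w = B v w) : u = v :=
  LinearMap.ker_eq_bot.1 hB.ker_eq_bot (LinearMap.ext h)

theorem trace_eq_zero_of_isSkewAdjoint [FiniteDimensional k V] [NeZero (2 : k)]
    {B : BilinForm k V} (hB : B.Nondegenerate) {f : Module.End k V} (hf : B.IsSkewAdjoint f) :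
    LinearMap.trace k V f = 0 := by
  have h : LinearMap.trace k V f = LinearMap.trace k V (-f) := trace_eq_of_isAdjointPair hB hf
  rw [map_neg] at h
  exact (mul_eq_zero_iff_left two_ne_zero).1 (by linear_combination h : (2 : k) * _ = 0)

theorem eq_zero_of_cyclic_sum_mul_eq_zero [FiniteDimensional k V] {B : BilinForm k V}
    (hB : B.Nondegenerate) (hskew : ∀ u v, B u v = -B v u) (hdim : (Module.finrank k V : k) ≠ 2)
    {α : Module.Dual k V} (hα : ∀ u v w, α w * B u v + α u * B v w + α v * B w u = 0) :
    α = 0 := by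
  obtain ⟨a, rfl⟩ := (B.toDual hB).surjective α
  simp only [LinearMap.BilinForm.toDual_def] at hα
  ext w
  have hop : B a w • LinearMap.id - (B a).smulRight w + (B w).smulRight a = 0 := by
    ext u
    refine hB.1 _ fun v => ?_
    simp only [LinearMap.add_apply, LinearMap.sub_apply, LinearMap.smul_apply,
      LinearMap.smulRight_apply, LinearMap.id_apply, map_add, map_sub, map_smul, smul_eq_mul]
    linear_combination hα u v w - B a u * hskew v w
  have htr := congrArg (LinearMap.trace k V) hop
  simp only [map_add, map_sub, map_smul, LinearMap.trace_id, LinearMap.trace_smulRight,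
    smul_eq_mul, map_zero] at htr
  refine (mul_eq_zero_iff_left (sub_ne_zero.2 hdim)).1 ?_
  rw [LinearMap.BilinForm.toDual_def]
  linear_combination htr - hskew w a

/-! ### Algebraic curvature operators -/

/-- The algebraic symmetries of the curvature operator `R(u, v)` of a metric connection
without torsion. -/
structure IsMetricCurvature (g : BilinForm k V) (R : V →ₗ[k] V →ₗ[k] Module.End k V) : Prop where
  isSymm : g.IsSymm
  nondegenerate : g.Nondegenerate
  antisymm : ∀ u v, R u v = -R v u
  bianchi : ∀ u v w, R u v w + R v w u + R w u v = 0
  isSkewAdjoint : ∀ u v, g.IsSkewAdjoint (R u v)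

/-- The algebraic symmetries of the curvature of a metric `g` for which the skew-adjoint
endomorphism `J` is parallel. The square of `J` is arbitrary, which covers the pseudo-Kähler and
the para-Kähler case at once. -/
structure IsKaehlerCurvature (g : BilinForm k V) (J : Module.End k V)
    (R : V →ₗ[k] V →ₗ[k] Module.End k V) : Prop extends IsMetricCurvature g R where
  isSkewAdjoint_J : g.IsSkewAdjoint J
  commute_J : ∀ u v, Commute J (R u v)

/-- The Ricci tensor `Ric(u, v) = tr (w ↦ R(w, u) v)` of a curvature operator. -/
noncomputable def ricciForm (R : V →ₗ[k] V →ₗ[k] Module.End k V) : BilinForm k V :=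
  LinearMap.mk₂ k (fun u v => LinearMap.trace k V ((R.flip u).flip v))
    (fun _ _ _ => by rw [← map_add]; congr 1; ext; simp)
    (fun _ _ _ => by rw [← map_smul]; congr 1; ext; simp)
    (fun _ _ _ => by rw [← map_add]; congr 1; ext; simp)
    (fun _ _ _ => by rw [← map_smul]; congr 1; ext; simp)

theorem ricciForm_apply (R : V →ₗ[k] V →ₗ[k] Module.End k V) (u v : V) :
    ricciForm R u v = LinearMap.trace k V ((R.flip u).flip v) := rfl

/-- The tensor `ω_{i(k}A_{l)j} − ω_{j(k}A_{l)i} + ω_{ij}A_{kl}` through which both the symplectic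
Weyl tensor and constant holomorphic sectional curvature are defined. -/
def ricciTypeTensor (ω A : V → V → k) (u v w z : V) : k :=
  (ω u w * A z v + ω u z * A w v) / 2 - (ω v w * A z u + ω v z * A w u) / 2 + ω u v * A w z

namespace IsMetricCurvature

variable {g : BilinForm k V} {R : V →ₗ[k] V →ₗ[k] Module.End k V}

theorem pair_symm [NeZero (2 : k)] (h : IsMetricCurvature g R) (u v w z : V) :
    g (R u v w) z = g (R w z u) v := by
  have antisymm (a b c d) : g (R a b c) d = -g (R b a c) d := by simp [h.antisymm a b]
  have skew (a b c d) : g (R a b c) d = -g (R a b d) c := by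
    simpa [h.isSymm.eq c] using h.isSkewAdjoint a b c d
  have bianchi (a b c d) : g (R a b c) d + g (R b c a) d + g (R c a b) d = 0 := by
    simpa using congrArg (g · d) (h.bianchi a b c)
  refine mul_left_cancel₀ (two_ne_zero (α := k)) ?_
  linear_combination bianchi u v w z + bianchi v w z u - bianchi w z u v - bianchi z u v w
    - skew v w u z - skew w z v u + skew z u w v + skew u v z w + skew u w v z + skew v z w u
    - antisymm w u v z - antisymm z v w u

theorem isSymm_ricciForm [FiniteDimensional k V] [NeZero (2 : k)] (h : IsMetricCurvature g R) :
    (ricciForm R).IsSymm where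
  eq u v := by
    have hop : (R.flip u).flip v - (R.flip v).flip u = -R u v := by
      ext w
      have hb := h.bianchi w u v
      rw [h.antisymm v w] at hb
      simp only [LinearMap.sub_apply, LinearMap.flip_apply, LinearMap.neg_apply] at hb ⊢
      rw [eq_neg_iff_add_eq_zero, ← hb]
      abel
    have htr := congrArg (LinearMap.trace k V) hop
    rw [map_sub, map_neg, trace_eq_zero_of_isSkewAdjoint h.nondegenerate (h.isSkewAdjoint u v),
      neg_zero, sub_eq_zero] at htr
    exact htr

end IsMetricCurvature

section Contraction

variable {g A : BilinForm k V} {J P : Module.End k V}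

/-- The endomorphism that represents, through the metric `g`, the bilinear form
`(a, b) ↦ ricciTypeTensor ω A u a b z` for `ω = g(J ·, ·)`; here `P` represents `A`. -/
noncomputable def ricciTypeContraction (g A : BilinForm k V) (J P : Module.End k V) (u z : V) :
    Module.End k V :=
  (2⁻¹ : k) • ((A z).smulRight (J u) + g (J u) z • P - A z u • J + (g (J z)).smulRight (P u))
    + (g (J u)).smulRight (P z)

theorem apply_ricciTypeContraction (hg : g.IsSymm) (hJ : g.IsSkewAdjoint J) (hA : A.IsSymm)
    (hP : ∀ u v, g (P u) v = A u v) (u z a b : V) :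
    g (ricciTypeContraction g A J P u z a) b =
      ricciTypeTensor (fun u v => g (J u) v) (fun u v => A u v) u a b z := by
  have hskew : g (J z) a = -g (J a) z := by simpa [hg.eq z] using hJ z a
  simp only [ricciTypeContraction, ricciTypeTensor, LinearMap.add_apply, LinearMap.sub_apply,
    LinearMap.smul_apply, LinearMap.smulRight_apply, map_add, map_sub, map_smul, smul_eq_mul, hP,
    hskew, hA.eq b]
  ring

theorem trace_ricciTypeContraction [FiniteDimensional k V] [NeZero (2 : k)] (hg : g.IsSymm)
    (hnd : g.Nondegenerate) (hJ : g.IsSkewAdjoint J) (hA : A.IsSymm)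
    (hAJ : ∀ u v, A (J u) v = -A u (J v)) (hP : ∀ u v, g (P u) v = A u v) (u z : V) :
    LinearMap.trace k V (ricciTypeContraction g A J P u z) =
      -(A u (J z) + LinearMap.trace k V P / 2 * g u (J z)) := by
  have hzu : A z (J u) = -A u (J z) := by rw [← hA.eq, hAJ]
  have hgJ : g (J u) z = -g u (J z) := by simpa using hJ u z
  simp only [ricciTypeContraction, map_add, map_sub, map_smul, LinearMap.trace_smulRight,
    smul_eq_mul, trace_eq_zero_of_isSkewAdjoint hnd hJ]
  rw [hg.eq (J z), hg.eq (J u) (P z), hP, hP, hzu, hgJ]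
  field_simp
  ring

/-- The endomorphism that represents, through the metric `g`, the bilinear form
`(a, b) ↦ -W u a b z`, where `W` is the Weyl-type tensor
`g (J (R u v w)) z - m * ricciTypeTensor (g (J ·) ·) (ricciForm R) u v w z`; here `P` represents
the Ricci form. -/
noncomputable def weylContraction (g : BilinForm k V) (J P : Module.End k V)
    (R : V →ₗ[k] V →ₗ[k] Module.End k V) (m : k) (u z : V) : Module.End k V :=
  (R.flip u).flip (J z) + m • ricciTypeContraction g (ricciForm R) J P u z

end Contraction

namespace IsKaehlerCurvature

variable {g : BilinForm k V} {J P : Module.End k V} {R : V →ₗ[k] V →ₗ[k] Module.End k V}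

theorem map_J_right (h : IsKaehlerCurvature g J R) (u v w : V) : R u v (J w) = J (R u v w) :=
  (congrArg (· w) (h.commute_J u v).eq).symm

theorem map_J_left [NeZero (2 : k)] (h : IsKaehlerCurvature g J R) (u v : V) :
    R (J u) v = -R u (J v) := by
  ext w
  refine eq_of_forall_apply_eq h.nondegenerate fun z => ?_
  calc g (R (J u) v w) z = g (J (R w z u)) v := by rw [h.pair_symm, h.map_J_right]
    _ = -g (R w z u) (J v) := by simpa using h.isSkewAdjoint_J (R w z u) v
    _ = g ((-R u (J v)) w) z := by simp [h.pair_symm u (J v)]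

theorem apply_J_curvature (h : IsKaehlerCurvature g J R) (u a b z : V) :
    g (J (R u a b)) z = -g (R a u (J z)) b :=
  calc g (J (R u a b)) z = -g (R u a b) (J z) := by simpa using h.isSkewAdjoint_J (R u a b) z
    _ = g b (R u a (J z)) := by simpa using congrArg Neg.neg (h.isSkewAdjoint u a b (J z))
    _ = -g (R a u (J z)) b := by rw [h.isSymm.eq, h.antisymm]; simp

variable [FiniteDimensional k V] [NeZero (2 : k)]

theorem ricciForm_J_left (h : IsKaehlerCurvature g J R) (u v : V) :
    ricciForm R (J u) v = -ricciForm R u (J v) := by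
  have hop : (R.flip (J u)).flip v = -((R.flip u).flip v ∘ₗ J) := by
    ext w
    simp [h.map_J_left w]
  have hop' : J ∘ₗ (R.flip u).flip v = (R.flip u).flip (J v) := by
    ext w
    simp [h.map_J_right]
  rw [ricciForm_apply, hop, map_neg, LinearMap.trace_comp_comm', hop', ricciForm_apply]

theorem trace_J_mul_curvature (h : IsKaehlerCurvature g J R) (u v : V) :
    LinearMap.trace k V (J * R u v) = -2 * ricciForm R u (J v) := by
  have hop : J * R u v = (R.flip (J u)).flip v - (R.flip (J v)).flip u := by
    ext w
    calc J (R u v w) = R (J w) v u - R (J w) u v := by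
          rw [← h.map_J_right, eq_sub_iff_add_eq, ← sub_eq_zero, ← h.bianchi u v (J w),
            h.antisymm v (J w), LinearMap.neg_apply]
          abel
      _ = R w (J u) v - R w (J v) u := by simp [h.map_J_left w, add_comm, sub_eq_add_neg]
  have htr := congrArg (LinearMap.trace k V) hop
  rw [map_sub, ← ricciForm_apply, ← ricciForm_apply, ← h.isSymm_ricciForm.eq u (J v),
    h.ricciForm_J_left] at htr
  linear_combination htr

theorem ricciForm_eq_of_eq_mul_ricciTypeTensor (h : IsKaehlerCurvature g J R)
    (hJ : Function.Surjective J) {c : k}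
    (hc : ∀ u v w z, g (J (R u v w)) z =
      c * ricciTypeTensor (fun u v => g (J u) v) (fun u v => g u v) u v w z) (u v : V) :
    ricciForm R u v = c * (1 + Module.finrank k V / 2) * g u v := by
  obtain ⟨z, rfl⟩ := hJ v
  have hgJ (u v : V) : g (J u) v = -g u (J v) := by simpa using h.isSkewAdjoint_J u v
  have hop : (R.flip u).flip (J z) = -c • ricciTypeContraction g g J 1 u z := by
    ext a
    refine eq_of_forall_apply_eq h.nondegenerate fun b => ?_
    have := h.apply_J_curvature u a b z
    rw [hc, ← apply_ricciTypeContraction (P := 1) h.isSymm h.isSkewAdjoint_J h.isSymm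
      (fun _ _ => rfl)] at this
    simp [this]
  rw [ricciForm_apply, hop, map_smul, trace_ricciTypeContraction h.isSymm h.nondegenerate
    h.isSkewAdjoint_J h.isSymm hgJ (fun _ _ => rfl), LinearMap.trace_one, smul_eq_mul]
  ring

theorem apply_weylContraction (h : IsKaehlerCurvature g J R)
    (hP : ∀ u v, g (P u) v = ricciForm R u v) (m : k) (u z a b : V) :
    g (weylContraction g J P R m u z a) b = -(g (J (R u a b)) z -
      m * ricciTypeTensor (fun u v => g (J u) v) (fun u v => ricciForm R u v) u a b z) := by
  rw [weylContraction, h.apply_J_curvature, ← apply_ricciTypeContraction h.isSymm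
    h.isSkewAdjoint_J h.isSymm_ricciForm hP]
  simp only [LinearMap.add_apply, LinearMap.flip_apply, LinearMap.smul_apply, map_add, map_smul,
    smul_eq_mul]
  ring

theorem trace_weylContraction (h : IsKaehlerCurvature g J R)
    (hP : ∀ u v, g (P u) v = ricciForm R u v) (m : k) (u z : V) :
    LinearMap.trace k V (weylContraction g J P R m u z) =
      (1 - m) * ricciForm R u (J z) - m / 2 * LinearMap.trace k V P * g u (J z) := by
  rw [weylContraction, map_add, map_smul, ← ricciForm_apply, trace_ricciTypeContraction h.isSymm
    h.nondegenerate h.isSkewAdjoint_J h.isSymm_ricciForm h.ricciForm_J_left hP, smul_eq_mul]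
  ring

theorem forall_trace_weylContraction_eq_zero_iff (h : IsKaehlerCurvature g J R)
    (hJ : Function.Surjective J) (hP : ∀ u v, g (P u) v = ricciForm R u v) {m : k} (hm : m ≠ 1)
    (hdim : m / 2 * Module.finrank k V = 1 - m) :
    (∀ u z, LinearMap.trace k V (weylContraction g J P R m u z) = 0) ↔
      ∃ κ, ∀ u v, ricciForm R u v = κ * g u v := by
  simp only [h.trace_weylContraction hP]
  constructor
  · intro htr
    refine ⟨m / 2 * LinearMap.trace k V P / (1 - m), fun u v => ?_⟩
    obtain ⟨z, rfl⟩ := hJ v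
    rw [div_mul_eq_mul_div, eq_div_iff (sub_ne_zero.2 hm.symm)]
    linear_combination htr u z
  · rintro ⟨κ, hκ⟩ u z
    have hPκ : P = κ • LinearMap.id := by
      ext u
      exact eq_of_forall_apply_eq h.nondegenerate fun v => by simp [hP, hκ]
    rw [hPκ, map_smul, LinearMap.trace_id, hκ, smul_eq_mul]
    linear_combination -κ * g u (J z) * hdim

end IsKaehlerCurvature

end Algebra

/-! ### Curvature of a symplectic connection -/

section Calculus

variable {F G H : Type*} [NormedAddCommGroup F] [NormedSpace ℝ F] [NormedAddCommGroup G]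
  [NormedSpace ℝ G] [NormedAddCommGroup H] [NormedSpace ℝ H]

theorem fderiv_clm_apply_apply {B : E → F →L[ℝ] G →L[ℝ] H} {u : E → F} {v : E → G} {x : E}
    (hB : DifferentiableAt ℝ B x) (hu : DifferentiableAt ℝ u x) (hv : DifferentiableAt ℝ v x)
    (w : E) :
    fderiv ℝ (fun y => B y (u y) (v y)) x w =
      fderiv ℝ B x w (u x) (v x) + B x (fderiv ℝ u x w) (v x) + B x (u x) (fderiv ℝ v x w) := by
  rw [fderiv_clm_apply (hB.clm_apply hu) hv, fderiv_clm_apply hB hu]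
  simp only [add_apply, ContinuousLinearMap.comp_apply,
    ContinuousLinearMap.flip_apply]
  abel

theorem fderiv_clm_apply_apply_const {B : E → F →L[ℝ] G →L[ℝ] H} {x : E}
    (hB : DifferentiableAt ℝ B x) (u : F) (v : G) (w : E) :
    fderiv ℝ (fun y => B y u v) x w = fderiv ℝ B x w u v := by
  rw [fderiv_clm_apply_apply hB (differentiableAt_const u) (differentiableAt_const v)]
  simp

theorem fderiv_fderiv_comm {f : E → F} (hf : ContDiff ℝ 2 f) (x u v : E) :
    fderiv ℝ (fderiv ℝ f) x u v = fderiv ℝ (fderiv ℝ f) x v u :=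
  (hf.contDiffAt.isSymmSndFDerivAt (by simp)).eq u v

theorem fderiv_fderiv_apply_comm {f : E → F} (hf : ContDiff ℝ 2 f) (x u v : E) :
    fderiv ℝ (fun y => fderiv ℝ f y u) x v = fderiv ℝ (fun y => fderiv ℝ f y v) x u := by
  have df : DifferentiableAt ℝ (fderiv ℝ f) x :=
    (hf.fderiv_right (m := 1) (by norm_num)).differentiable (by simp) x
  rw [fderiv_clm_apply df (differentiableAt_const u),
    fderiv_clm_apply df (differentiableAt_const v)]
  simpa using fderiv_fderiv_comm hf x v u

end Calculus

/-- The trace, as a continuous linear functional on the continuous endomorphisms. -/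
noncomputable def endTrace [FiniteDimensional ℝ E] : (E →L[ℝ] E) →L[ℝ] ℝ :=
  LinearMap.toContinuousLinearMap (LinearMap.trace ℝ E ∘ₗ ContinuousLinearMap.coeLM ℝ)

theorem endTrace_apply [FiniteDimensional ℝ E] (A : E →L[ℝ] E) :
    endTrace A = LinearMap.trace ℝ E A := rfl

theorem endTrace_mul_comm [FiniteDimensional ℝ E] (A B : E →L[ℝ] E) :
    endTrace (A * B) = endTrace (B * A) := by
  rw [endTrace_apply, endTrace_apply]
  exact LinearMap.trace_mul_comm ℝ (A : E →ₗ[ℝ] E) B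

namespace SympConnection

variable {Ω : SympForm E} (C : SympConnection Ω)

theorem contDiff_two : ContDiff ℝ 2 C.Γ := C.smooth.of_le (by norm_cast)

theorem differentiable : Differentiable ℝ C.Γ := C.contDiff_two.differentiable (by simp)

theorem differentiable_fderiv : Differentiable ℝ (fderiv ℝ C.Γ) :=
  (C.contDiff_two.fderiv_right (m := 1) (by norm_num)).differentiable (by simp)

theorem curvOp_antisymm (x u v : E) : curvOp C x u v = -curvOp C x v u := by
  simp only [curvOp]
  abel

theorem first_bianchi (x u v w : E) :
    curvOp C x u v w + curvOp C x v w u + curvOp C x w u v = 0 := by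
  have fderiv_symm (a p q : E) : fderiv ℝ C.Γ x a p q = fderiv ℝ C.Γ x a q p := by
    simp only [← fderiv_clm_apply_apply_const (C.differentiable x), C.symm _ p q]
  simp only [curvOp, sub_apply, add_apply, ContinuousLinearMap.comp_apply, fderiv_symm u v w,
    fderiv_symm v w u, fderiv_symm w u v, C.symm x v w, C.symm x w u, C.symm x u v]
  abel

/-- The field `B` of bilinear forms is parallel: `∇B = 0`. -/
def IsParallelForm (B : E → E →L[ℝ] E →L[ℝ] ℝ) : Prop :=
  ∀ x u v w, fderiv ℝ B x u v w = B x (C.Γ x u v) w + B x v (C.Γ x u w)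

variable {C} in
theorem IsParallelForm.fderiv_fderiv_apply {B : E → E →L[ℝ] E →L[ℝ] ℝ} (h : C.IsParallelForm B)
    (hB : Differentiable ℝ B) (x a b p q : E) :
    fderiv ℝ (fun y => fderiv ℝ (fun y => B y p q) y b) x a =
      fderiv ℝ B x a (C.Γ x b p) q + B x (fderiv ℝ C.Γ x a b p) q
        + (fderiv ℝ B x a p (C.Γ x b q) + B x p (fderiv ℝ C.Γ x a b q)) := by
  have dconst (r : E) : DifferentiableAt ℝ (fun _ : E => r) x := differentiableAt_const r
  have dΓ (r : E) : DifferentiableAt ℝ (fun y => C.Γ y b r) x :=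
    ((C.differentiable x).clm_apply (dconst b)).clm_apply (dconst r)
  have hΓ (r : E) := fderiv_clm_apply_apply_const (C.differentiable x) b r a
  simp only [fun y => fderiv_clm_apply_apply_const (hB y) p q b, h _ b p q]
  rw [fderiv_fun_add (((hB x).clm_apply (dΓ p)).clm_apply (dconst q))
      (((hB x).clm_apply (dconst p)).clm_apply (dΓ q)), add_apply,
    fderiv_clm_apply_apply (hB x) (dΓ p) (dconst q),
    fderiv_clm_apply_apply (hB x) (dconst p) (dΓ q), hΓ, hΓ]
  simp

variable {C} in
theorem IsParallelForm.curvOp_skew {B : E → E →L[ℝ] E →L[ℝ] ℝ} (h : C.IsParallelForm B)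
    (hB : ContDiff ℝ 2 B) (x u v w z : E) :
    B x (curvOp C x u v w) z = -B x w (curvOp C x u v z) := by
  have hBwz : ContDiff ℝ 2 fun y => B y w z := by fun_prop
  have hsymm := fderiv_fderiv_apply_comm hBwz x u v
  have dB : Differentiable ℝ B := hB.differentiable (by simp)
  rw [h.fderiv_fderiv_apply dB, h.fderiv_fderiv_apply dB, h, h, h, h] at hsymm
  simp only [curvOp, sub_apply, add_apply, ContinuousLinearMap.comp_apply, map_add, map_sub]
  linear_combination -hsymm

/-- The covariant derivative `∇_w A` of a field `A` of endomorphisms. -/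
noncomputable def covDerivEnd (A : E → E →L[ℝ] E) (x w : E) : E →L[ℝ] E :=
  fderiv ℝ A x w + (C.Γ x w * A x - A x * C.Γ x w)

theorem differentiable_curvOp (u v : E) : Differentiable ℝ fun y => curvOp C y u v := by
  have dΓ := C.differentiable
  have ddΓ := C.differentiable_fderiv
  unfold curvOp
  fun_prop

theorem fderiv_curvOp (x u v w : E) :
    fderiv ℝ (fun y => curvOp C y u v) x w =
      fderiv ℝ (fderiv ℝ C.Γ) x w u v - fderiv ℝ (fderiv ℝ C.Γ) x w v u
        + (fderiv ℝ C.Γ x w u * C.Γ x v + C.Γ x u * fderiv ℝ C.Γ x w v)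
        - (fderiv ℝ C.Γ x w v * C.Γ x u + C.Γ x v * fderiv ℝ C.Γ x w u) := by
  have dΓ (a : E) : HasFDerivAt (fun y => C.Γ y a) _ x :=
    (C.differentiable x).hasFDerivAt.clm_apply (hasFDerivAt_const a x)
  have ddΓ (a b : E) : HasFDerivAt (fun y => fderiv ℝ C.Γ y a b) _ x :=
    ((C.differentiable_fderiv x).hasFDerivAt.clm_apply (hasFDerivAt_const a x)).clm_apply
      (hasFDerivAt_const b x)
  have h : HasFDerivAt (fun y => curvOp C y u v) _ x :=
    (((ddΓ u v).sub (ddΓ v u)).add ((dΓ u).clm_comp (dΓ v))).sub ((dΓ v).clm_comp (dΓ u))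
  rw [h.fderiv]
  ext q
  simp only [ContinuousLinearMap.comp_zero, zero_add, sub_apply, add_apply,
    ContinuousLinearMap.flip_apply, ContinuousLinearMap.comp_apply,
    ContinuousLinearMap.compL_apply, mul_apply_eq_comp]
  abel

theorem second_bianchi (x u v w : E) :
    C.covDerivEnd (curvOp C · u v) x w + C.covDerivEnd (curvOp C · v w) x u
      + C.covDerivEnd (curvOp C · w u) x v = 0 := by
  have hcurv (a b : E) : curvOp C x a b = fderiv ℝ C.Γ x a b - fderiv ℝ C.Γ x b a
      + C.Γ x a * C.Γ x b - C.Γ x b * C.Γ x a := rfl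
  simp only [covDerivEnd, fderiv_curvOp, hcurv, fderiv_fderiv_comm C.contDiff_two x w u,
    fderiv_fderiv_comm C.contDiff_two x w v, fderiv_fderiv_comm C.contDiff_two x u v]
  noncomm_ring

theorem fderiv_trace_mul [FiniteDimensional ℝ E] {A B : E → E →L[ℝ] E} {x : E}
    (hA : DifferentiableAt ℝ A x) (hB : DifferentiableAt ℝ B x) (w : E) :
    fderiv ℝ (fun y => endTrace (A y * B y)) x w =
      endTrace (C.covDerivEnd A x w * B x) + endTrace (A x * C.covDerivEnd B x w) := by
  have h := (endTrace (E := E)).hasFDerivAt.comp x (hA.hasFDerivAt.clm_comp hB.hasFDerivAt)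
  have hcomm := endTrace_mul_comm (C.Γ x w) (A x * B x)
  calc fderiv ℝ (fun y => endTrace (A y * B y)) x w
      = endTrace (A x * fderiv ℝ B x w + fderiv ℝ A x w * B x) := congrArg (· w) h.fderiv
    _ = _ := by
      simp only [covDerivEnd, mul_add, mul_sub, add_mul, sub_mul, map_add, map_sub, mul_assoc]
        at hcomm ⊢
      linear_combination -hcomm

/-- The curvature of `C` at `x` as a bilinear map with values in endomorphisms. -/
noncomputable def curvTensor (x : E) : E →ₗ[ℝ] E →ₗ[ℝ] Module.End ℝ E :=
  LinearMap.mk₂ ℝ (fun u v => (curvOp C x u v : E →ₗ[ℝ] E))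
    (fun _ _ _ => by
      ext
      simp only [curvOp, map_add, add_apply, ContinuousLinearMap.add_comp,
        ContinuousLinearMap.comp_add, ContinuousLinearMap.coe_coe, sub_apply, LinearMap.add_apply]
      abel)
    (fun _ _ _ => by ext; simp [curvOp, smul_sub, smul_add])
    (fun _ _ _ => by
      ext
      simp only [curvOp, map_add, add_apply, ContinuousLinearMap.add_comp,
        ContinuousLinearMap.comp_add, ContinuousLinearMap.coe_coe, sub_apply, LinearMap.add_apply]
      abel)
    (fun _ _ _ => by ext; simp [curvOp, smul_sub, smul_add])

theorem curvTensor_apply (x u v w : E) : C.curvTensor x u v w = curvOp C x u v w := rfl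

theorem ricciForm_curvTensor (x u v : E) : ricciForm (C.curvTensor x) u v = ricci C x u v := rfl

theorem endTrace_mul_curvOp_cyclic_sum_eq_zero [FiniteDimensional ℝ E] {J : E → E →L[ℝ] E}
    (hJ : Differentiable ℝ J) (hpar : ∀ x w, C.covDerivEnd J x w = 0) (x u v w : E) :
    fderiv ℝ (fun y => endTrace (J y * curvOp C y u v)) x w
      + fderiv ℝ (fun y => endTrace (J y * curvOp C y v w)) x u
      + fderiv ℝ (fun y => endTrace (J y * curvOp C y w u)) x v = 0 := by
  have h (a b c : E) : fderiv ℝ (fun y => endTrace (J y * curvOp C y a b)) x c =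
      endTrace (J x * C.covDerivEnd (curvOp C · a b) x c) := by
    rw [C.fderiv_trace_mul (hJ x) (C.differentiable_curvOp a b x), hpar, zero_mul, map_zero,
      zero_add]
  rw [h, h, h, ← map_add, ← map_add, ← mul_add, ← mul_add, C.second_bianchi, mul_zero, map_zero]

end SympConnection

theorem nondegenerate_toBilinForm [FiniteDimensional ℝ E] {B : E →L[ℝ] E →L[ℝ] ℝ}
    (hB : ∀ u, (∀ v, B u v = 0) → u = 0) : B.toBilinForm.Nondegenerate :=
  .ofSeparatingLeft hB

namespace SympForm

variable (Ω : SympForm E)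

theorem differentiable : Differentiable ℝ Ω.ω := Ω.smooth.differentiable (by simp)

theorem differentiable_of_differentiable_mul [Nontrivial E] {f : E → ℝ}
    (hf : ∀ u v, Differentiable ℝ fun y => f y * Ω.ω y u v) : Differentiable ℝ f := by
  intro x
  obtain ⟨u, hu⟩ := exists_ne (0 : E)
  obtain ⟨v, hv⟩ : ∃ v, Ω.ω x u v ≠ 0 := by
    by_contra! h
    exact hu (Ω.nondeg x u h)
  have hΩ : DifferentiableAt ℝ (fun y => Ω.ω y u v) x :=
    ((Ω.differentiable x).clm_apply (differentiableAt_const u)).clm_apply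
      (differentiableAt_const v)
  refine ((hf u v x).mul (hΩ.inv hv)).congr_of_eventuallyEq ?_
  filter_upwards [hΩ.continuousAt.eventually_ne hv] with y hy
  simp [hy]

end SympForm

theorem SympConnection.fderiv_cyclic_sum_eq_zero {Ω : SympForm E} (C : SympConnection Ω)
    (x u v w : E) :
    fderiv ℝ Ω.ω x w u v + fderiv ℝ Ω.ω x u v w + fderiv ℝ Ω.ω x v w u = 0 := by
  rw [C.parallel, C.parallel, C.parallel, C.symm x w u, C.symm x v u, C.symm x w v]
  linear_combination
    Ω.skew x (C.Γ x u w) v + Ω.skew x (C.Γ x v w) u + Ω.skew x (C.Γ x u v) w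

theorem SympConnection.eq_of_mul_closed [FiniteDimensional ℝ E] {Ω : SympForm E}
    (C : SympConnection Ω) (hdim : Module.finrank ℝ E ≠ 2) {f : E → ℝ}
    (hf : ∀ u v, Differentiable ℝ fun y => f y * Ω.ω y u v)
    (hclosed : ∀ x u v w, fderiv ℝ (fun y => f y * Ω.ω y u v) x w
      + fderiv ℝ (fun y => f y * Ω.ω y v w) x u + fderiv ℝ (fun y => f y * Ω.ω y w u) x v = 0)
    (x y : E) : f x = f y := by
  cases subsingleton_or_nontrivial E
  · rw [Subsingleton.elim x y]
  have df : Differentiable ℝ f := Ω.differentiable_of_differentiable_mul hf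
  refine is_const_of_fderiv_eq_zero df (fun x => ?_) x y
  have hleibniz (u v w : E) : fderiv ℝ (fun y => f y * Ω.ω y u v) x w =
      f x * fderiv ℝ Ω.ω x w u v + fderiv ℝ f x w * Ω.ω x u v := by
    have hΩ : DifferentiableAt ℝ (fun y => Ω.ω y u v) x :=
      ((Ω.differentiable x).clm_apply (differentiableAt_const u)).clm_apply
        (differentiableAt_const v)
    rw [fderiv_fun_mul (df x) hΩ, ← fderiv_clm_apply_apply_const (Ω.differentiable x)]
    simp [mul_comm]
  have hwedge : (fderiv ℝ f x : E →ₗ[ℝ] ℝ) = 0 := by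
    refine eq_zero_of_cyclic_sum_mul_eq_zero (nondegenerate_toBilinForm (Ω.nondeg x)) (Ω.skew x)
      (by exact_mod_cast hdim) fun u v w => ?_
    have h := hclosed x u v w
    rw [hleibniz, hleibniz, hleibniz] at h
    simp only [ContinuousLinearMap.coe_coe, ContinuousLinearMap.toBilinForm_apply]
    linear_combination h - f x * C.fderiv_cyclic_sum_eq_zero x u v w
  exact ContinuousLinearMap.coe_injective hwedge

theorem SympConnection.exists_forall_apply_eq_weyl [FiniteDimensional ℝ E] {Ω : SympForm E}
    (C : SympConnection Ω) (n : ℕ) (x u a b : E) :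
    ∃ t, ∀ z, Ω.ω x t z = weyl n C x u a b z := by
  let W : Module.Dual ℝ E :=
    { toFun := weyl n C x u a b
      map_add' := fun z z' => by
        simp only [weyl, Rlow, ← ricciForm_curvTensor, map_add, LinearMap.add_apply]
        ring
      map_smul' := fun r z => by
        simp only [weyl, Rlow, ← ricciForm_curvTensor, map_smul, LinearMap.smul_apply,
          smul_eq_mul, RingHom.id_apply]
        ring }
  have hΩ := nondegenerate_toBilinForm (Ω.nondeg x)
  exact ⟨((Ω.ω x).toBilinForm.toDual hΩ).symm W, fun z =>
    LinearMap.BilinForm.apply_toDual_symm_apply (hB := hΩ) W z⟩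

/-! ### Metrics compatible with the symplectic form -/

/-- `C` is the Levi-Civita connection of the pseudo-Riemannian metric `g`, and `J` is the
endomorphism field that relates `g` to `Ω`. The square of `J` is arbitrary, so that pseudo-Kähler
and para-Kähler structures are both instances. -/
structure IsCompatibleMetric {Ω : SympForm E} (C : SympConnection Ω)
    (g : E → E →L[ℝ] E →L[ℝ] ℝ) (J : E → E →L[ℝ] E) : Prop where
  contDiff : ContDiff ℝ 2 g
  differentiable_J : Differentiable ℝ J
  symm : ∀ x u v, g x u v = g x v u
  nondeg : ∀ x u, (∀ v, g x u v = 0) → u = 0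
  compat : ∀ x u v, g x (J x u) v = Ω.ω x u v
  isLeviCivita : IsLeviCivita C (fun y a b => g y a b)

/-- The symplectic Weyl tensor is trace-free with respect to `g`, that is
`g^{ab}W_{iab}{}^pg_{pj} = 0`. The map `T` raises the last index of `W` with `Ω`, and `D` raises
the index `b` with `g`. -/
def WeylTraceFree (n : ℕ) {Ω : SympForm E} (C : SympConnection Ω)
    (g : E → E →L[ℝ] E →L[ℝ] ℝ) : Prop :=
  ∀ x u v, ∀ T : E → E → E, (∀ a b z, Ω.ω x (T a b) z = weyl n C x u a b z) →
    ∀ D : E →ₗ[ℝ] E, (∀ a b, g x (D a) b = g x (T a b) v) → LinearMap.trace ℝ E D = 0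

namespace IsCompatibleMetric

variable {Ω : SympForm E} {C : SympConnection Ω} {g : E → E →L[ℝ] E →L[ℝ] ℝ} {J : E → E →L[ℝ] E}

theorem differentiable (h : IsCompatibleMetric C g J) : Differentiable ℝ g :=
  h.contDiff.differentiable (by simp)

theorem isParallelForm (h : IsCompatibleMetric C g J) : C.IsParallelForm g := fun x u v w => by
  rw [← h.isLeviCivita x u v w, fderiv_clm_apply_apply_const (h.differentiable x)]

theorem apply_J_right (h : IsCompatibleMetric C g J) (x u v : E) :
    g x u (J x v) = -Ω.ω x u v := by
  rw [h.symm, h.compat, Ω.skew]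

theorem eq_of_forall_apply_eq (h : IsCompatibleMetric C g J) {x u v : E}
    (huv : ∀ w, g x u w = g x v w) : u = v := by
  rw [← sub_eq_zero]
  exact h.nondeg x _ fun w => by simp [huv w]

theorem covDerivEnd_J (h : IsCompatibleMetric C g J) (x w : E) : C.covDerivEnd J x w = 0 := by
  ext u
  refine h.nondeg x _ fun v => ?_
  have hΩ : fderiv ℝ (fun y => g y (J y u) v) x w = fderiv ℝ Ω.ω x w u v := by
    simp only [h.compat, fderiv_clm_apply_apply_const (Ω.differentiable x)]
  have dJu : DifferentiableAt ℝ (fun y => J y u) x :=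
    (h.differentiable_J x).clm_apply (differentiableAt_const u)
  rw [fderiv_clm_apply_apply (h.differentiable x) dJu (differentiableAt_const v),
    fderiv_clm_apply (h.differentiable_J x) (differentiableAt_const u), h.isParallelForm,
    C.parallel, h.compat] at hΩ
  simp only [fderiv_fun_const, Pi.zero_apply, ContinuousLinearMap.comp_zero, zero_add,
    ContinuousLinearMap.flip_apply, zero_apply, map_zero, add_zero] at hΩ
  simp only [SympConnection.covDerivEnd, ContinuousLinearMap.mul_def, add_apply, sub_apply,
    ContinuousLinearMap.comp_apply, map_add, map_sub, h.compat]
  linear_combination hΩ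

theorem isKaehlerCurvature [FiniteDimensional ℝ E] (h : IsCompatibleMetric C g J) (x : E) :
    IsKaehlerCurvature (g x).toBilinForm (J x : E →ₗ[ℝ] E) (C.curvTensor x) where
  isSymm := ⟨h.symm x⟩
  nondegenerate := nondegenerate_toBilinForm (h.nondeg x)
  antisymm u v := by
    ext w
    exact DFunLike.congr_fun (C.curvOp_antisymm x u v) w
  bianchi := C.first_bianchi x
  isSkewAdjoint u v w z := by
    simpa [C.curvTensor_apply] using h.isParallelForm.curvOp_skew h.contDiff x u v w z
  isSkewAdjoint_J u v := by
    simp [h.compat, h.apply_J_right]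
  commute_J u v := by
    refine LinearMap.ext fun w => h.eq_of_forall_apply_eq (x := x) fun z => ?_
    have hΩ : Ω.ω x (curvOp C x u v w) z = -Ω.ω x w (curvOp C x u v z) :=
      SympConnection.IsParallelForm.curvOp_skew C.parallel (Ω.smooth.of_le (by norm_cast)) x u v w z
    calc g x (J x (curvOp C x u v w)) z = -Ω.ω x w (curvOp C x u v z) := by rw [h.compat, hΩ]
      _ = g x (curvOp C x u v (J x w)) z := by
        rw [h.isParallelForm.curvOp_skew h.contDiff, h.compat]

theorem surjective_J [FiniteDimensional ℝ E] (h : IsCompatibleMetric C g J) (x : E) :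
    Function.Surjective (J x) := by
  refine LinearMap.surjective_of_injective (f := (J x : E →ₗ[ℝ] E)) ?_
  refine (injective_iff_map_eq_zero _).2 fun u hu => Ω.nondeg x u fun v => ?_
  rw [← h.compat, ← ContinuousLinearMap.coe_coe (J x), hu, map_zero, zero_apply]

theorem weyl_eq (h : IsCompatibleMetric C g J) (n : ℕ) (x u v w z : E) :
    weyl n C x u v w z = g x (J x (curvOp C x u v w)) z - 1 / ((n : ℝ) + 1) *
      ricciTypeTensor (fun u v => g x (J x u) v) (fun u v => ricciForm (C.curvTensor x) u v)
        u v w z := by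
  simp only [weyl, Rlow, ricciTypeTensor, h.compat, SympConnection.ricciForm_curvTensor]

theorem exists_ricciOperator [FiniteDimensional ℝ E] (h : IsCompatibleMetric C g J) :
    ∃ P : E → Module.End ℝ E, ∀ x u v, g x (P x u) v = ricci C x u v :=
  ⟨fun x => (ricciForm (C.curvTensor x)).symmCompOfNondegenerate (g x).toBilinForm
    (nondegenerate_toBilinForm (h.nondeg x)), fun x u v =>
      LinearMap.BilinForm.symmCompOfNondegenerate_left_apply (ricciForm (C.curvTensor x))
        (nondegenerate_toBilinForm (h.nondeg x)) v u⟩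

theorem weylTraceFree_iff_trace [FiniteDimensional ℝ E] (h : IsCompatibleMetric C g J) (n : ℕ)
    {P : E → Module.End ℝ E} (hP : ∀ x u v, g x (P x u) v = ricci C x u v) :
    WeylTraceFree n C g ↔ ∀ x u z, LinearMap.trace ℝ E (weylContraction (g x).toBilinForm
      (J x : E →ₗ[ℝ] E) (P x) (C.curvTensor x) (1 / ((n : ℝ) + 1)) u z) = 0 := by
  have hL (x u z a b : E) : g x (weylContraction (g x).toBilinForm (J x : E →ₗ[ℝ] E) (P x)
      (C.curvTensor x) (1 / ((n : ℝ) + 1)) u z a) b = -weyl n C x u a b z := by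
    rw [h.weyl_eq]
    exact (h.isKaehlerCurvature x).apply_weylContraction (hP x) _ u z a b
  constructor
  · intro hW x u z
    choose T hT using fun a b => C.exists_forall_apply_eq_weyl n x u a b
    exact hW x u (J x z) T hT _ fun a b => by rw [hL, h.apply_J_right, hT]
  · intro htr x u v T hT D hD
    obtain ⟨z, rfl⟩ := h.surjective_J x v
    rw [← htr x u z]
    congr 1
    ext a
    exact h.eq_of_forall_apply_eq fun b => by rw [hD, hL, h.apply_J_right, hT]

theorem weylTraceFree_iff_forall_exists [FiniteDimensional ℝ E] (h : IsCompatibleMetric C g J)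
    {n : ℕ} (hn : n ≠ 0) (hdim : Module.finrank ℝ E = 2 * n) :
    WeylTraceFree n C g ↔ ∀ x, ∃ κ : ℝ, ∀ u v, ricci C x u v = κ * g x u v := by
  obtain ⟨P, hP⟩ := h.exists_ricciOperator
  rw [h.weylTraceFree_iff_trace n hP]
  refine forall_congr' fun x => (h.isKaehlerCurvature x).forall_trace_weylContraction_eq_zero_iff
    (h.surjective_J x) (hP x) ?_ ?_
  · field_simp
    simpa using hn
  · rw [hdim]
    push_cast
    field_simp
    ring

theorem weylTraceFree_of_weylFlat (h : IsCompatibleMetric C g J) {n : ℕ} (hW : WeylFlat n C) :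
    WeylTraceFree n C g := by
  intro x u v T hT D hD
  have hT' (a b : E) : T a b = 0 := Ω.nondeg x _ fun z => by rw [hT, hW]
  have hD' : D = 0 := LinearMap.ext fun a => h.nondeg x _ fun b => by simp [hD, hT']
  rw [hD', map_zero]

theorem eq_of_ricci_eq_mul [FiniteDimensional ℝ E] (h : IsCompatibleMetric C g J)
    (hdim : Module.finrank ℝ E ≠ 2) {f : E → ℝ} (hf : ∀ x u v, ricci C x u v = f x * g x u v)
    (x y : E) : f x = f y := by
  have htr (u v : E) : (fun y => f y * Ω.ω y u v) =
      fun y => 2⁻¹ * endTrace (J y * curvOp C y u v) := by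
    ext y
    have hJR : endTrace (J y * curvOp C y u v) = -2 * ricci C y u (J y v) :=
      (h.isKaehlerCurvature y).trace_J_mul_curvature u v
    rw [hJR, hf, h.apply_J_right]
    ring
  have htr_diff (u v : E) : Differentiable ℝ fun y => endTrace (J y * curvOp C y u v) := by
    have hmul : Differentiable ℝ fun y => J y * curvOp C y u v :=
      h.differentiable_J.clm_comp (C.differentiable_curvOp u v)
    exact (endTrace (E := E)).differentiable.comp hmul
  refine C.eq_of_mul_closed hdim (fun u v => ?_) (fun x u v w => ?_) x y
  · rw [htr]
    exact (htr_diff u v).const_mul _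
  · simp only [htr, fderiv_const_mul (htr_diff _ _ x), smul_apply, smul_eq_mul, ← mul_add,
      C.endTrace_mul_curvOp_cyclic_sum_eq_zero h.differentiable_J h.covDerivEnd_J, mul_zero]

theorem weylTraceFree_iff_einstein [FiniteDimensional ℝ E] (h : IsCompatibleMetric C g J)
    {n : ℕ} (hn : 2 ≤ n) (hdim : Module.finrank ℝ E = 2 * n) :
    WeylTraceFree n C g ↔ ∃ κ : ℝ, ∀ x u v, ricci C x u v = κ * g x u v := by
  rw [h.weylTraceFree_iff_forall_exists (by lia) hdim]
  constructor
  · intro hE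
    choose f hf using hE
    exact ⟨f 0, fun x u v => by rw [hf, h.eq_of_ricci_eq_mul (by lia) hf x 0]⟩
  · rintro ⟨κ, hκ⟩ x
    exact ⟨κ, hκ x⟩

theorem ricci_eq_of_constHoloSec [FiniteDimensional ℝ E] (h : IsCompatibleMetric C g J) {c : ℝ}
    (hc : ConstHoloSec C (fun y a b => g y a b) c) (x u v : E) :
    ricci C x u v = 2 * c * (1 + Module.finrank ℝ E / 2) * g x u v := by
  refine (h.isKaehlerCurvature x).ricciForm_eq_of_eq_mul_ricciTypeTensor (h.surjective_J x)
    (fun u v w z => ?_) u v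
  simpa [ricciTypeTensor, h.compat, Rlow, C.curvTensor_apply] using hc x u v w z

end IsCompatibleMetric

theorem weylFlat_iff_constHoloSec {Ω : SympForm E} {C : SympConnection Ω} {g : E → E → E → ℝ}
    {κ : ℝ} (hκ : ∀ x u v, ricci C x u v = κ * g x u v) (n : ℕ) :
    WeylFlat n C ↔ ConstHoloSec C g (κ / (2 * (n + 1))) := by
  have hn : (n : ℝ) + 1 ≠ 0 := by positivity
  simp only [WeylFlat, ConstHoloSec, weyl, hκ, sub_eq_zero]
  refine forall_congr' fun x => forall_congr' fun u => forall_congr' fun v =>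
    forall_congr' fun w => forall_congr' fun z => Eq.congr_right ?_
  field_simp

theorem statement_0_general [FiniteDimensional ℝ E] {n : ℕ} (hn : 2 ≤ n)
    (hdim : Module.finrank ℝ E = 2 * n) {Ω : SympForm E} {C : SympConnection Ω}
    {g : E → E →L[ℝ] E →L[ℝ] ℝ} {J : E → E →L[ℝ] E} (h : IsCompatibleMetric C g J) :
    (WeylTraceFree n C g ↔ ∃ κ : ℝ, ∀ x u v, ricci C x u v = κ * g x u v) ∧
      (WeylFlat n C ↔ ∃ c : ℝ, ConstHoloSec C (fun y a b => g y a b) c) := by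
  refine ⟨h.weylTraceFree_iff_einstein hn hdim, fun hW => ?_, fun ⟨c, hc⟩ => ?_⟩
  · obtain ⟨κ, hκ⟩ := (h.weylTraceFree_iff_einstein hn hdim).1 (h.weylTraceFree_of_weylFlat hW)
    exact ⟨_, (weylFlat_iff_constHoloSec hκ n).1 hW⟩
  · have hric := h.ricci_eq_of_constHoloSec hc
    refine (weylFlat_iff_constHoloSec hric n).2 ?_
    convert hc using 1
    rw [hdim]
    push_cast
    field_simp
    ring

/-- For the Levi-Civita connection `C` of a pseudo-Kähler (`ε = -1`) or
para-Kähler (`ε = 1`) structure `(g, J, Ω)` on a symplectic manifold of dimension `2n > 2`: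
(1) the symplectic Weyl tensor is trace-free with respect to `g` iff `g` is Einstein;
(2) the symplectic Weyl tensor vanishes iff `(g, J, Ω)` has constant (para-)holomorphic
sectional curvature.  The `g`-trace `g^{ab}W_{iab}{}^{p}g_{pj}` is encoded through any linear
packagings `T` (of the `(1,3)`-Weyl tensor, via `Ω`) and `D` (via `g`), which exist and are
unique by nondegeneracy. -/
theorem statement_0 {E : Type*} [NormedAddCommGroup E] [NormedSpace ℝ E]
    [FiniteDimensional ℝ E]
    (n : ℕ) (hn : 2 ≤ n) (hdim : Module.finrank ℝ E = 2 * n)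
    (Ω : SympForm E) (C : SympConnection Ω)
    (ε : ℝ) (hε : ε = 1 ∨ ε = -1)
    (g : E → E →L[ℝ] E →L[ℝ] ℝ) (J : E → E →L[ℝ] E)
    (hgsmooth : ContDiff ℝ (⊤ : ℕ∞) g) (hJsmooth : ContDiff ℝ (⊤ : ℕ∞) J)
    (hgsymm : ∀ x u v, g x u v = g x v u)
    (hgnondeg : ∀ x u, (∀ v, g x u v = 0) → u = 0)
    (hJsq : ∀ x u, J x (J x u) = ε • u)
    (hJint : ∀ x u v, nijTensor (fun y w => J y w) x u v = 0)
    (hcompat : ∀ x u v, g x (J x u) v = Ω.ω x u v)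
    (hLC : IsLeviCivita C (fun y a b => g y a b)) :
    ((∀ x u v, ∀ T : E → E → E,
        (∀ a b z, Ω.ω x (T a b) z = weyl n C x u a b z) →
        ∀ D : E →ₗ[ℝ] E, (∀ a b, g x (D a) b = g x (T a b) v) →
        LinearMap.trace ℝ E D = 0)
      ↔ ∃ κ : ℝ, ∀ x u v, ricci C x u v = κ * g x u v)
    ∧ (WeylFlat n C ↔ ∃ c : ℝ, ConstHoloSec C (fun y a b => g y a b) c) :=
  statement_0_general hn hdim ⟨hgsmooth.of_le (by norm_cast), hJsmooth.differentiable (by simp),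
    hgsymm, hgnondeg, hcompat, hLC⟩
end

section
/- On a 2n-dimensional symplectic manifold (M, Ω), a symplectic connection ∇ is Weyl flat (W_{ijkl} = 0) if and only if there is a symmetric covariant 2-tensor field A_{ij} = A_{(ij)} such that for every p ∈ M and every 2-dimensional symplectic subspace L ⊂ T_pM there holds scurv_{p,L}(Z) = 4A(Z, Z) for all Z ∈ L. Moreover, in this case 2(n+1)A_{ij} = R_{ij}. -/
variable {E : Type*} [NormedAddCommGroup E] [NormedSpace ℝ E]

/-!
The curvature of `∇` has the symmetries `R u v w z = -R v u w z = R u v z w` and satisfies the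
Bianchi identity. Polarising `u ↦ R u v u u` and using these symmetries recovers `R`, so a tensor of
this type is determined by the numbers `R u v u u`, and by additivity in `v` already by those with
`Ω(u, v) ≠ 0`. These numbers are read off from the symplectic curvature with `Z = X = u` and
`Y = v`. Hence `scurv(Z) = 4A(Z, Z)` forces `R` to be the model tensor built from `Ω` and `A`, and
taking the trace gives `Ric = 2(n+1)A`, so that this model tensor is the Ricci part of the
curvature.
-/

open LinearMap (BilinForm)

section Curvature

variable {𝕜 V : Type*} [CommRing 𝕜] [AddCommGroup V]

/-- The algebraic symmetries of the curvature tensor `R_{ijkl}` of a symplectic connection.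
Additivity and the symmetries determine such a tensor from its diagonal values, so homogeneity is
not required, and additivity is imposed only in one slot of each symmetric or skew pair. -/
structure IsSympCurvature (R : V → V → V → V → 𝕜) : Prop where
  add_first : ∀ u u' v w z, R (u + u') v w z = R u v w z + R u' v w z
  add_third : ∀ u v w w' z, R u v (w + w') z = R u v w z + R u v w' z
  skew : ∀ u v w z, R u v w z = -R v u w z
  symm : ∀ u v w z, R u v w z = R u v z w
  bianchi : ∀ u v w z, R u v w z + R v w u z + R w u v z = 0

namespace IsSympCurvature

variable {R S : V → V → V → V → 𝕜}

theorem add_second (hR : IsSympCurvature R) (u v v' w z : V) :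
    R u (v + v') w z = R u v w z + R u v' w z := by
  rw [hR.skew, hR.add_first, hR.skew v, hR.skew v']
  ring

theorem add_fourth (hR : IsSympCurvature R) (u v w z z' : V) :
    R u v w (z + z') = R u v w z + R u v w z' := by
  rw [hR.symm, hR.add_third, hR.symm u v z, hR.symm u v z']

theorem zero_first (hR : IsSympCurvature R) (v w z : V) : R 0 v w z = 0 := by
  simpa using hR.add_first 0 0 v w z

theorem sub (hR : IsSympCurvature R) (hS : IsSympCurvature S) :
    IsSympCurvature fun u v w z => R u v w z - S u v w z where
  add_first u u' v w z := by rw [hR.add_first, hS.add_first]; ring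
  add_third u v w w' z := by rw [hR.add_third, hS.add_third]; ring
  skew u v w z := by rw [hR.skew, hS.skew]; ring
  symm u v w z := by rw [hR.symm, hS.symm]
  bianchi u v w z := by linear_combination hR.bianchi u v w z - hS.bianchi u v w z

variable [NoZeroDivisors 𝕜] [NeZero (2 : 𝕜)]

theorem cyclic_sum_eq_zero (hR : IsSympCurvature R) (hdiag : ∀ u v, R u v u u = 0)
    (u v w z : V) : R u v w z + R w v u z + R z v u w = 0 := by
  have huwz := hdiag (u + w + z) v
  have huw := hdiag (u + w) v
  have huz := hdiag (u + z) v
  have hwz := hdiag (w + z) v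
  simp only [hR.add_first, hR.add_third, hR.add_fourth] at huwz huw huz hwz
  have htwice : 2 * (R u v w z + R w v u z + R z v u w) = 0 := by
    linear_combination huwz - huw - huz - hwz + hdiag u v + hdiag w v + hdiag z v
      + hR.symm u v w z + hR.symm w v u z + hR.symm z v u w
  exact (mul_eq_zero.mp htwice).resolve_left two_ne_zero

theorem eq_zero_of_diag (hR : IsSympCurvature R) (hdiag : ∀ u v, R u v u u = 0)
    (u v w z : V) : R u v w z = 0 := by
  have hfour : 2 * (2 * R u v w z) = 0 := by
    linear_combination hR.cyclic_sum_eq_zero hdiag u v w z - hR.cyclic_sum_eq_zero hdiag v u w z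
      + hR.bianchi u v w z + hR.bianchi u v z w + hR.symm u v w z
      + hR.skew v u w z - hR.skew w v u z - hR.skew z v u w
  simpa [two_ne_zero] using hfour

theorem eq_zero_of_diag_of_ne_zero [Module 𝕜 V] (hR : IsSympCurvature R) {ω : BilinForm 𝕜 V}
    (hω : ω.SeparatingLeft) (hdiag : ∀ u v, ω u v ≠ 0 → R u v u u = 0) (u v w z : V) :
    R u v w z = 0 := by
  refine hR.eq_zero_of_diag (fun u v => ?_) u v w z
  by_cases huv : ω u v = 0
  · by_cases hu : u = 0
    · rw [hu, hR.zero_first]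
    · obtain ⟨v', hv'⟩ : ∃ v', ω u v' ≠ 0 := by
        contrapose! hu
        exact hω u hu
      have hsum : R u (v + v') u u = 0 := hdiag u (v + v') (by rwa [map_add, huv, zero_add])
      rwa [hR.add_second, hdiag u v' hv', add_zero] at hsum
  · exact hdiag u v huv

theorem eq_of_diag_of_ne_zero [Module 𝕜 V] (hR : IsSympCurvature R) (hS : IsSympCurvature S)
    {ω : BilinForm 𝕜 V} (hω : ω.SeparatingLeft)
    (hdiag : ∀ u v, ω u v ≠ 0 → R u v u u = S u v u u) (u v w z : V) :
    R u v w z = S u v w z :=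
  sub_eq_zero.mp <| (hR.sub hS).eq_zero_of_diag_of_ne_zero hω
    (fun u v huv => sub_eq_zero.mpr (hdiag u v huv)) u v w z

end IsSympCurvature

end Curvature

section Model

variable {𝕜 V : Type*} [CommRing 𝕜] [AddCommGroup V] [Module 𝕜 V] {ω A : BilinForm 𝕜 V}

/-- The curvature tensor `2(Ω_{i(k}A_{l)j} − Ω_{j(k}A_{l)i} + Ω_{ij}A_{kl})` of Ricci type, written
without the halves of the symmetrisations. It is the model for the trace part of `R_{ijkl}`. -/
def ricciTypeCurv (ω A : BilinForm 𝕜 V) (u v w z : V) : 𝕜 :=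
  ω u w * A z v + ω u z * A w v - (ω v w * A z u + ω v z * A w u) + 2 * (ω u v * A w z)

theorem isSympCurvature_ricciTypeCurv (hω : ω.IsAlt) (hA : A.IsSymm) :
    IsSympCurvature (ricciTypeCurv ω A) where
  add_first u u' v w z := by simp only [ricciTypeCurv, map_add, LinearMap.add_apply]; ring
  add_third u v w w' z := by simp only [ricciTypeCurv, map_add, LinearMap.add_apply]; ring
  skew u v w z := by
    simp only [ricciTypeCurv]
    linear_combination -2 * A w z * hω.neg_eq u v
  symm u v w z := by
    simp only [ricciTypeCurv]
    linear_combination 2 * ω u v * hA.eq w z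
  bianchi u v w z := by
    simp only [ricciTypeCurv, ← hω.neg_eq u v, ← hω.neg_eq v w, ← hω.neg_eq w u, hA.eq v u,
      hA.eq w v, hA.eq w u, hA.eq u z, hA.eq v z, hA.eq w z]
    ring

theorem ricciTypeCurv_apply_of_mem_span_pair (hω : ω.IsAlt) (hA : A.IsSymm) {X Y Z : V}
    (hZ : Z ∈ Submodule.span 𝕜 {X, Y}) :
    ricciTypeCurv ω A X Y Z Z = 4 * A Z Z * ω X Y := by
  obtain ⟨a, b, rfl⟩ := Submodule.mem_span_pair.mp hZ
  simp only [ricciTypeCurv, map_add, map_smul, LinearMap.add_apply, LinearMap.smul_apply,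
    smul_eq_mul, hω.self_eq_zero, ← hω.neg_eq X Y, hA.eq Y X]
  ring

end Model

section Trace

variable {𝕜 V : Type*} [Field 𝕜] [NeZero (2 : 𝕜)] [AddCommGroup V] [Module 𝕜 V]
  [FiniteDimensional 𝕜 V] {ω A : BilinForm 𝕜 V}

theorem trace_eq_zero_of_isSkewAdjoint_s5 {B : BilinForm 𝕜 V} (hB : B.Nondegenerate)
    {D : V →ₗ[𝕜] V} (hD : LinearMap.IsSkewAdjoint B D) : LinearMap.trace 𝕜 V D = 0 := by
  have hconj : (B.toDual hB).conj (-D) = Module.Dual.transpose (R := 𝕜) D := by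
    ext f z
    obtain ⟨p, rfl⟩ := (B.toDual hB).surjective f
    simp [LinearEquiv.conj_apply, Module.Dual.transpose_apply, BilinForm.toDual_def, hD p z]
  have hself : LinearMap.trace 𝕜 V D = -LinearMap.trace 𝕜 V D := by
    rw [← map_neg, ← LinearMap.trace_conj' (-D) (B.toDual hB), hconj, LinearMap.trace_transpose']
  have htwice : 2 * LinearMap.trace 𝕜 V D = 0 := by linear_combination hself
  exact (mul_eq_zero.mp htwice).resolve_left two_ne_zero

theorem trace_ricciTypeCurv (hω : ω.IsAlt) (hnd : ω.Nondegenerate) (hA : A.IsSymm) {u v : V}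
    {T : V →ₗ[𝕜] V} (hT : ∀ p z, ω (T p) z = ricciTypeCurv ω A p u v z) :
    LinearMap.trace 𝕜 V T = (Module.finrank 𝕜 V + 2) * A u v := by
  obtain ⟨ρ, hρ⟩ : ∃ ρ : V →ₗ[𝕜] V, ∀ p z, ω (ρ p) z = A p z :=
    ⟨A.symmCompOfNondegenerate ω hnd, fun p z => A.symmCompOfNondegenerate_left_apply hnd z p⟩
  have hρ_trace : LinearMap.trace 𝕜 V ρ = 0 := by
    refine trace_eq_zero_of_isSkewAdjoint_s5 hnd fun p z => ?_
    rw [Pi.neg_apply, map_neg, hω.neg_eq, hρ, hρ, hA.eq]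
  have hT_eq : T = (ω.flip v).smulRight (ρ u) + A u v • LinearMap.id - ω u v • ρ
      - (A v).smulRight u + (2 : 𝕜) • (ω.flip u).smulRight (ρ v) := by
    ext p
    refine sub_eq_zero.mp (hnd.1 _ fun z => ?_)
    simp only [LinearMap.add_apply, LinearMap.sub_apply, LinearMap.coe_smulRight,
      BilinForm.flip_apply, LinearMap.smul_apply, LinearMap.id_apply, map_sub, map_add, map_smul,
      smul_eq_mul, hT, hρ, ricciTypeCurv, hA.eq z u, hA.eq z p, hA.eq v u]
    ring
  simp only [hT_eq, map_add, map_sub, map_smul, LinearMap.trace_smulRight, hρ_trace,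
    LinearMap.trace_id, BilinForm.flip_apply, hρ, smul_eq_mul, hA.eq v u]
  ring

end Trace

theorem hasFDerivAt_apply_apply {𝕜 E F G H : Type*} [NontriviallyNormedField 𝕜]
    [NormedAddCommGroup E] [NormedSpace 𝕜 E] [NormedAddCommGroup F] [NormedSpace 𝕜 F]
    [NormedAddCommGroup G] [NormedSpace 𝕜 G] [NormedAddCommGroup H] [NormedSpace 𝕜 H]
    {f : E → F →L[𝕜] G →L[𝕜] H} {f' : E →L[𝕜] F →L[𝕜] G →L[𝕜] H} {x : E}
    (hf : HasFDerivAt f f' x) (u : F) (v : G) :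
    HasFDerivAt (fun y => f y u v) ((f'.flip u).flip v) x := by
  simpa using (hf.clm_apply (hasFDerivAt_const u x)).clm_apply (hasFDerivAt_const v x)

section Connection

variable {Ω : SympForm E}

theorem SympForm.isAlt (Ω : SympForm E) (x : E) : (Ω.ω x).toBilinForm.IsAlt := fun u =>
  self_eq_neg.mp (Ω.skew x u u)

theorem SympForm.nondegenerate (Ω : SympForm E) (x : E) : (Ω.ω x).toBilinForm.Nondegenerate :=
  (LinearMap.IsAlt.isRefl (Ω.isAlt x)).nondegenerate_iff_separatingLeft.mpr (Ω.nondeg x)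

namespace SympConnection

variable (C : SympConnection Ω) (x : E)

theorem hasFDerivAt_Γ_apply (v w : E) :
    HasFDerivAt (fun y => C.Γ y v w) (((fderiv ℝ C.Γ x).flip v).flip w) x :=
  hasFDerivAt_apply_apply (C.smooth.differentiable (by simp) x).hasFDerivAt v w

theorem fderiv_Γ_symm (a u v : E) : fderiv ℝ C.Γ x a u v = fderiv ℝ C.Γ x a v u := by
  have hderiv := C.hasFDerivAt_Γ_apply x u v
  simp only [C.symm _ u v] at hderiv
  simpa using congr($(hderiv.unique (C.hasFDerivAt_Γ_apply x v u)) a)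

theorem curvOp_apply (u v w : E) :
    curvOp C x u v w = fderiv ℝ C.Γ x u v w - fderiv ℝ C.Γ x v u w
      + C.Γ x u (C.Γ x v w) - C.Γ x v (C.Γ x u w) := by
  simp [curvOp]

theorem curvOp_swap (u v : E) : curvOp C x u v = -curvOp C x v u := by
  simp only [curvOp]
  abel

theorem curvOp_bianchi (u v w : E) :
    curvOp C x u v w + curvOp C x v w u + curvOp C x w u v = 0 := by
  simp only [curvOp_apply]
  rw [C.fderiv_Γ_symm x u v w, C.fderiv_Γ_symm x v w u, C.fderiv_Γ_symm x w u v,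
    C.symm x v w, C.symm x u w, C.symm x u v]
  abel

set_option maxSynthPendingDepth 5 in
theorem fderiv_fderiv_ω (u v w z : E) :
    fderiv ℝ (fderiv ℝ Ω.ω) x u v w z =
      Ω.ω x (C.Γ x u (C.Γ x v w)) z + Ω.ω x (C.Γ x v w) (C.Γ x u z)
      + Ω.ω x (fderiv ℝ C.Γ x u v w) z
      + Ω.ω x (C.Γ x u w) (C.Γ x v z) + Ω.ω x w (C.Γ x u (C.Γ x v z))
      + Ω.ω x w (fderiv ℝ C.Γ x u v z) := by
  have hω : HasFDerivAt Ω.ω (fderiv ℝ Ω.ω x) x :=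
    (Ω.smooth.differentiable (by simp) x).hasFDerivAt
  have hdω : HasFDerivAt (fderiv ℝ Ω.ω) (fderiv ℝ (fderiv ℝ Ω.ω) x) x :=
    ((Ω.smooth.fderiv_right (m := 1) (by norm_cast)).differentiable (by simp) x).hasFDerivAt
  have hleft := (hasFDerivAt_apply_apply hdω v w).clm_apply (hasFDerivAt_const z x)
  have hright := ((hω.clm_apply (C.hasFDerivAt_Γ_apply x v w)).clm_apply
    (hasFDerivAt_const z x)).add
      ((hω.clm_apply (hasFDerivAt_const w x)).clm_apply (C.hasFDerivAt_Γ_apply x v z))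
  simp only [C.parallel] at hleft
  have heq := congr($(hleft.unique hright) u)
  simp only [ContinuousLinearMap.comp_zero, zero_add, ContinuousLinearMap.flip_apply,
    ContinuousLinearMap.flip_add, add_apply, ContinuousLinearMap.comp_apply, C.parallel] at heq
  rw [heq]
  ring

set_option maxSynthPendingDepth 5 in
/-- Since `Ω` is parallel, this is the symmetry of its second derivative. -/
theorem Rlow_symm (u v w z : E) : Rlow C x u v w z = Rlow C x u v z w := by
  have hsymm : IsSymmSndFDerivAt ℝ Ω.ω x :=
    Ω.smooth.contDiffAt.isSymmSndFDerivAt (by simpa using ENat.LEInfty.out)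
  have heq := congr($(hsymm u v) w z)
  simp only [C.fderiv_fderiv_ω] at heq
  rw [Rlow, Rlow, Ω.skew x (curvOp C x u v z)]
  simp only [curvOp_apply, map_add, map_sub, add_apply, sub_apply]
  linarith

theorem isSkewAdjoint_curvOp (u v : E) :
    LinearMap.IsSkewAdjoint (Ω.ω x).toBilinForm (curvOp C x u v) := fun w z => by
  simpa [Ω.skew x w, Rlow] using C.Rlow_symm x u v w z

theorem isSympCurvature_Rlow : IsSympCurvature (Rlow C x) where
  add_first u u' v w z := by
    simp only [Rlow, curvOp_apply, map_add, map_sub, add_apply, sub_apply]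
    ring
  add_third u v w w' z := by simp [Rlow]
  skew u v w z := by simp [Rlow, C.curvOp_swap x u v]
  symm := C.Rlow_symm x
  bianchi u v w z := by
    simp only [Rlow, ← add_apply, ← map_add, curvOp_bianchi, map_zero, zero_apply]

theorem scurv_eq_iff_Rlow_eq_ricciTypeCurv {A : BilinForm ℝ E} (hA : A.IsSymm) :
    (∀ X Y, Ω.ω x X Y ≠ 0 → ∀ Z ∈ Submodule.span ℝ {X, Y}, scurv C x X Y Z = 4 * A Z Z) ↔
      ∀ u v w z, Rlow C x u v w z = ricciTypeCurv (Ω.ω x).toBilinForm A u v w z := by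
  have hmodel := isSympCurvature_ricciTypeCurv (Ω.isAlt x) hA
  constructor
  · intro h
    refine (C.isSympCurvature_Rlow x).eq_of_diag_of_ne_zero hmodel (Ω.nondegenerate x).1 ?_
    intro X Y hXY
    have hX : X ∈ Submodule.span ℝ {X, Y} := Submodule.subset_span (by simp)
    rw [ricciTypeCurv_apply_of_mem_span_pair (Ω.isAlt x) hA hX]
    exact (div_eq_iff hXY).mp (h X Y hXY X hX)
  · intro h X Y hXY Z hZ
    rw [scurv, div_eq_iff hXY, h]
    exact ricciTypeCurv_apply_of_mem_span_pair (Ω.isAlt x) hA hZ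

/-- The endomorphism `p ↦ R(p, u)v`, whose trace defines the Ricci tensor. -/
noncomputable def ricciOp (u v : E) : E →ₗ[ℝ] E where
  toFun p := curvOp C x p u v
  map_add' p q := by
    simp only [curvOp_apply, map_add, add_apply]
    abel
  map_smul' c p := by simp [curvOp_apply, smul_sub, smul_add]

theorem ricci_eq_trace_ricciOp (u v : E) :
    ricci C x u v = LinearMap.trace ℝ E (C.ricciOp x u v) :=
  rfl

theorem ricci_add_left (u u' v : E) : ricci C x (u + u') v = ricci C x u v + ricci C x u' v := by
  simp only [ricci, ← map_add]
  congr 1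
  ext p
  simp
  abel

theorem ricci_smul_left (c : ℝ) (u v : E) : ricci C x (c • u) v = c • ricci C x u v := by
  simp only [ricci, ← map_smul]
  congr 1
  ext p
  simp [smul_sub, smul_add]

variable [FiniteDimensional ℝ E]

theorem ricci_symm (u v : E) : ricci C x u v = ricci C x v u := by
  have hop : C.ricciOp x u v = C.ricciOp x v u - curvOp C x u v := by
    ext p
    refine sub_eq_zero.mp ?_
    rw [← C.curvOp_bianchi x u v p]
    simp [ricciOp, C.curvOp_swap x p v]
    abel
  rw [ricci_eq_trace_ricciOp, ricci_eq_trace_ricciOp, hop, map_sub,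
    trace_eq_zero_of_isSkewAdjoint_s5 (Ω.nondegenerate x) (C.isSkewAdjoint_curvOp x u v), sub_zero]

/-- The Ricci tensor at `x` as a continuous bilinear form. -/
noncomputable def ricciTensor : E →L[ℝ] E →L[ℝ] ℝ :=
  (LinearMap.mk₂ ℝ (ricci C x) (C.ricci_add_left x) (C.ricci_smul_left x)
    (fun u v v' => by simp only [C.ricci_symm x u, C.ricci_add_left])
    (fun c u v => by simp only [C.ricci_symm x u, C.ricci_smul_left])).toContinuousBilinearMap

theorem ricciTensor_apply (u v : E) : C.ricciTensor x u v = ricci C x u v := rfl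

theorem ricci_eq_of_scurv_eq {A : E →L[ℝ] E →L[ℝ] ℝ} (hA : ∀ u v, A u v = A v u)
    (h : ∀ X Y, Ω.ω x X Y ≠ 0 → ∀ Z ∈ Submodule.span ℝ {X, Y}, scurv C x X Y Z = 4 * A Z Z)
    (u v : E) : (Module.finrank ℝ E + 2) * A u v = ricci C x u v := by
  have hR := (C.scurv_eq_iff_Rlow_eq_ricciTypeCurv x (A := A.toBilinForm) ⟨hA⟩).mp h
  rw [ricci_eq_trace_ricciOp]
  exact (trace_ricciTypeCurv (A := A.toBilinForm) (T := C.ricciOp x u v) (Ω.isAlt x)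
    (Ω.nondegenerate x) ⟨hA⟩ fun p z => hR p u v z).symm

theorem weylFlat_iff_Rlow_eq_ricciTypeCurv (n : ℕ) :
    WeylFlat n C ↔ ∀ x u v w z, Rlow C x u v w z = ricciTypeCurv (Ω.ω x).toBilinForm
      ((2 * ((n : ℝ) + 1))⁻¹ • C.ricciTensor x).toBilinForm u v w z := by
  have hn : (n : ℝ) + 1 ≠ 0 := by positivity
  refine forall₅_congr fun x u v w z => ?_
  rw [weyl, sub_eq_zero]
  refine Eq.congr_right ?_
  simp only [ricciTypeCurv, ContinuousLinearMap.toBilinForm_apply, smul_apply, ricciTensor_apply,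
    smul_eq_mul]
  field_simp

end SympConnection

end Connection

/-- On a `2n`-dimensional symplectic manifold, a symplectic connection is Weyl
flat if and only if there is a symmetric covariant 2-tensor field `A` such that for every
point `x` and every 2-dimensional symplectic subspace `L` (spanned by `X, Y` with
`Ω(X,Y) ≠ 0`) one has `scurv_{x,L}(Z) = 4A(Z,Z)` for all `Z ∈ L`.  Moreover, any such `A`
satisfies `2(n+1)A = Ric`. -/
theorem statement_5 {E : Type*} [NormedAddCommGroup E] [NormedSpace ℝ E]
    [FiniteDimensional ℝ E]
    (n : ℕ) (hn : 1 ≤ n) (hdim : Module.finrank ℝ E = 2 * n)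
    (Ω : SympForm E) (C : SympConnection Ω) :
    (WeylFlat n C ↔
      ∃ A : E → E →L[ℝ] E →L[ℝ] ℝ, (∀ x u v, A x u v = A x v u) ∧
        ∀ x X Y, Ω.ω x X Y ≠ 0 →
          ∀ Z ∈ Submodule.span ℝ ({X, Y} : Set E), scurv C x X Y Z = 4 * A x Z Z)
    ∧ (∀ A : E → E →L[ℝ] E →L[ℝ] ℝ, (∀ x u v, A x u v = A x v u) →
        (∀ x X Y, Ω.ω x X Y ≠ 0 →
          ∀ Z ∈ Submodule.span ℝ ({X, Y} : Set E), scurv C x X Y Z = 4 * A x Z Z) →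
        ∀ x u v, 2 * ((n : ℝ) + 1) * A x u v = ricci C x u v) := by
  have hfinrank : (Module.finrank ℝ E : ℝ) + 2 = 2 * (n + 1) := by
    rw [hdim]
    push_cast
    ring
  rw [C.weylFlat_iff_Rlow_eq_ricciTypeCurv, ← hfinrank]
  refine ⟨⟨fun hR => ?_, ?_⟩, fun A hA h x => C.ricci_eq_of_scurv_eq x (hA x) (h x)⟩
  · let A x := ((Module.finrank ℝ E : ℝ) + 2)⁻¹ • C.ricciTensor x
    have hA x u v : A x u v = A x v u :=
      congrArg (((Module.finrank ℝ E : ℝ) + 2)⁻¹ * ·) (C.ricci_symm x u v)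
    exact ⟨A, hA, fun x => (C.scurv_eq_iff_Rlow_eq_ricciTypeCurv x ⟨hA x⟩).mpr (hR x)⟩
  · rintro ⟨A, hA, h⟩ x
    have hA_eq : ((Module.finrank ℝ E : ℝ) + 2)⁻¹ • C.ricciTensor x = A x := by
      ext u v
      rw [smul_apply, smul_apply, SympConnection.ricciTensor_apply,
        ← C.ricci_eq_of_scurv_eq x (hA x) (h x), smul_eq_mul]
      exact inv_mul_cancel_left₀ (by positivity) _
    rw [hA_eq]
    exact (C.scurv_eq_iff_Rlow_eq_ricciTypeCurv x ⟨hA x⟩).mp (h x)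
end
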